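/- Lemma (lower bound on Willie's Holevo information): Let supp(ω_1) ⊆ supp(ω_0). For any covert secrecy code satisfying the covertness constraint D(ρ̄_{W^n}||ω_0^{⊗n}) ≤ δ_n^{cov}, the Holevo (mutual) information between the classical channel input and Willie's output satisfies I(x^n; W^n)_{ρ̄} ≥ n μ_n D(ω_1||ω_0) − 2 δ_n^{cov}, provided lim_{n→∞} √n μ_n = 0, where μ_n ∈ o(1) is the average probability of transmitting a non-innocent symbol. -/

import Mathlib

open Matrix Filter
open scoped Kronecker Classical ComplexOrder

noncomputable section

namespace CovertPaper



variable {ι : Type*} [Fintype ι] [DecidableEq ι]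

/-- `ρ` is a density matrix (state). -/
def IsDensity (ρ : Matrix ι ι ℂ) : Prop := ρ.PosSemidef ∧ ρ.trace = 1

/-- `supp ρ ⊆ supp σ`, expressed (for Hermitian PSD matrices) as `ker σ ⊆ ker ρ`. -/
def SuppLE (ρ σ : Matrix ι ι ℂ) : Prop :=
  ∀ v : ι → ℂ, σ.mulVec v = 0 → ρ.mulVec v = 0

/-- Functional calculus on Hermitian matrices (junk value `0` otherwise). -/
def matFun (f : ℝ → ℝ) (A : Matrix ι ι ℂ) : Matrix ι ι ℂ :=
  if hA : A.IsHermitian then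
    (hA.eigenvectorUnitary : Matrix ι ι ℂ) *
      diagonal (fun i => (f (hA.eigenvalues i) : ℂ)) *
      (star (hA.eigenvectorUnitary : Matrix ι ι ℂ))
  else 0

/-- Matrix logarithm of a Hermitian matrix (`0` on the kernel, by `Real.log 0 = 0`). -/
def matLog (A : Matrix ι ι ℂ) : Matrix ι ι ℂ := matFun Real.log A

/-- Trace norm `‖A‖₁ = Tr √(AᴴA)`. -/
def traceNorm (A : Matrix ι ι ℂ) : ℝ := ((matFun Real.sqrt (Aᴴ * A)).trace).re

/-- Fidelity `F(ρ,σ) = ‖√ρ√σ‖₁²`. -/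
def fidelity (ρ σ : Matrix ι ι ℂ) : ℝ :=
  (traceNorm (matFun Real.sqrt ρ * matFun Real.sqrt σ)) ^ 2

/-- von Neumann entropy `H(ρ) = −Tr[ρ log ρ]` (natural logarithm). -/
def vnEnt (ρ : Matrix ι ι ℂ) : ℝ := -((ρ * matLog ρ).trace).re

/-- Quantum (Umegaki) relative entropy `D(ρ‖σ) = Tr[ρ (log ρ − log σ)]`; this real-valued
formula agrees with the usual definition whenever `supp ρ ⊆ supp σ`. -/
def relEnt (ρ σ : Matrix ι ι ℂ) : ℝ := ((ρ * (matLog ρ - matLog σ)).trace).re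

/-- The quantum chi-square divergence
`χ²(ρ‖σ) = (∂²/∂α²) D(αρ + (1−α)σ ‖ σ) |_{α=0}`. -/
def chiSq (ρ σ : Matrix ι ι ℂ) : ℝ :=
  iteratedDeriv 2 (fun α : ℝ => relEnt ((α : ℂ) • ρ + ((1 - α : ℝ) : ℂ) • σ) σ) 0

section PTrace

variable {α β : Type*} [Fintype α] [Fintype β]

/-- Partial trace over the second (right) tensor factor. -/
def ptraceRight (ρ : Matrix (α × β) (α × β) ℂ) : Matrix α α ℂ :=
  of fun a a' => ∑ b, ρ (a, b) (a', b)

/-- Partial trace over the first (left) tensor factor. -/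
def ptraceLeft (ρ : Matrix (α × β) (α × β) ℂ) : Matrix β β ℂ :=
  of fun b b' => ∑ a, ρ (a, b) (a, b')

/-- The product state `⊗_{i=1}^n ω_{x_i}` associated with a classical string `x^n`. -/
def stringState {d : ℕ} (ω : Fin d → Matrix β β ℂ) {n : ℕ} (x : Fin n → Fin d) :
    Matrix (Fin n → β) (Fin n → β) ℂ :=
  of fun a b => ∏ i, ω (x i) (a i) (b i)

/-- The `n`-fold tensor power `ω^{⊗n}`. -/
def tpow (ω : Matrix β β ℂ) (n : ℕ) : Matrix (Fin n → β) (Fin n → β) ℂ :=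
  of fun a b => ∏ i, ω (a i) (b i)

end PTrace

/-- Asymptotic little-o : `f ∈ o(g)` iff `f/g → 0`. -/
def LittleO (f g : ℕ → ℝ) : Prop :=
  Tendsto (fun n => f n / g n) atTop (nhds 0)

/-- Asymptotic little-omega : `f ∈ ω(g)` iff `|f/g| → ∞`. -/
def LittleOmega (f g : ℕ → ℝ) : Prop :=
  Tendsto (fun n => |f n / g n|) atTop atTop

section CQ

variable {B W : Type*} [Fintype B] [DecidableEq B] [Fintype W] [DecidableEq W]

/-- Bob's reduced output `σ_x` of the classical-quantum channel `π`. -/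
def bobOut (π : Fin 2 → Matrix (B × W) (B × W) ℂ) (x : Fin 2) : Matrix B B ℂ :=
  ptraceRight (π x)

/-- Willie's reduced output `ω_x` of the classical-quantum channel `π`. -/
def willieOut (π : Fin 2 → Matrix (B × W) (B × W) ℂ) (x : Fin 2) : Matrix W W ℂ :=
  ptraceLeft (π x)

variable (π : Fin 2 → Matrix (B × W) (B × W) ℂ)

/-- Bob's output state for the codeword `x^n`. -/
def bobWord {n : ℕ} (x : Fin n → Fin 2) : Matrix (Fin n → B) (Fin n → B) ℂ :=
  stringState (bobOut π) x

/-- Willie's output state for the codeword `x^n`. -/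
def willieWord {n : ℕ} (x : Fin n → Fin 2) : Matrix (Fin n → W) (Fin n → W) ℂ :=
  stringState (willieOut π) x

/-- `Λ` is a (sub-normalized) decoding POVM for each key value. -/
def IsPOVM {n M L K : ℕ} (Λ : Fin K → Fin M → Fin L → Matrix (Fin n → B) (Fin n → B) ℂ) :
    Prop :=
  (∀ k m ℓ, (Λ k m ℓ).PosSemidef) ∧
    ∀ k, ((1 : Matrix (Fin n → B) (Fin n → B) ℂ) - ∑ m, ∑ ℓ, Λ k m ℓ).PosSemidef

/-- Average decoding error probability of a covert secrecy code. -/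
def avgErr {n M L K : ℕ} (f : Fin M → Fin L → Fin K → Fin n → Fin 2)
    (Λ : Fin K → Fin M → Fin L → Matrix (Fin n → B) (Fin n → B) ℂ) : ℝ :=
  ((M : ℝ) * L * K)⁻¹ *
    ∑ m, ∑ ℓ, ∑ k, (1 - ((Λ k m ℓ * bobWord π (f m ℓ k)).trace).re)

/-- Willie's average output state `ρ̄_{W^n}` (averaged over message, public message and key). -/
def willieAvg {n M L K : ℕ} (f : Fin M → Fin L → Fin K → Fin n → Fin 2) :
    Matrix (Fin n → W) (Fin n → W) ℂ :=
  ((((M : ℝ) * L * K)⁻¹ : ℝ) : ℂ) • ∑ m, ∑ ℓ, ∑ k, willieWord π (f m ℓ k)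

/-- Willie's state `ρ_{W^n}^{(m)}` given the secret message `m` (averaged over `ℓ` and `k`). -/
def willieMsg {n M L K : ℕ} (f : Fin M → Fin L → Fin K → Fin n → Fin 2) (m : Fin M) :
    Matrix (Fin n → W) (Fin n → W) ℂ :=
  ((((L : ℝ) * K)⁻¹ : ℝ) : ℂ) • ∑ ℓ, ∑ k, willieWord π (f m ℓ k)

/-- The covertness criterion `D(ρ̄_{W^n} ‖ ω₀^{⊗n}) ≤ δ_cov`. -/
def Covert {n M L K : ℕ} (f : Fin M → Fin L → Fin K → Fin n → Fin 2) (δcov : ℝ) : Prop :=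
  relEnt (willieAvg π f) (tpow (willieOut π 0) n) ≤ δcov

/-- The secrecy criterion: some state `ρ̆` independent of `m` is `δ_sec`-close on average. -/
def Secret {n M L K : ℕ} (f : Fin M → Fin L → Fin K → Fin n → Fin 2) (δsec : ℝ) : Prop :=
  ∃ ρ' : Matrix (Fin n → W) (Fin n → W) ℂ, IsDensity ρ' ∧
    (M : ℝ)⁻¹ * ∑ m, traceNorm (willieMsg π f m - ρ') ≤ δsec

/-- Existence of an `(|M|,|L|,|K|,n,ε,δ_cov,δ_sec)` covert secrecy code. -/
def CodeExists (n M L K : ℕ) (ε δcov δsec : ℝ) : Prop :=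
  ∃ (f : Fin M → Fin L → Fin K → Fin n → Fin 2)
    (Λ : Fin K → Fin M → Fin L → Matrix (Fin n → B) (Fin n → B) ℂ),
      IsPOVM (B := B) Λ ∧ avgErr π f Λ ≤ ε ∧ Covert π f δcov ∧ Secret π f δsec

end CQ



/-- The average probability `μ` of transmitting a non-innocent symbol:
`μ = 1 − Pr[x_J = 0]` for a uniform position `J` and codeword induced by the uniform and
independent message, public message and key. -/
def sparsity {n M L K : ℕ} (f : Fin M → Fin L → Fin K → Fin n → Fin 2) : ℝ :=
  ((n : ℝ) * M * L * K)⁻¹ *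
    ∑ m, ∑ ℓ, ∑ k, ∑ i, (if f m ℓ k i = 0 then (0 : ℝ) else 1)

section Statement8

variable {B W : Type*} [Fintype B] [DecidableEq B] [Fintype W] [DecidableEq W]

/-- The Holevo (quantum mutual) information `I(x^n; W^n)` between the classical channel
input and Willie's output: `H(ρ̄_{W^n}) − Σ_{x^n} p(x^n) H(ω_{x^n})`, where `p` is the
distribution of the codeword under uniform `(m,ℓ,k)`. -/
def holevoW {B W : Type*} [Fintype B] [DecidableEq B] [Fintype W] [DecidableEq W]
    (π : Fin 2 → Matrix (B × W) (B × W) ℂ)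
    {n M L K : ℕ} (f : Fin M → Fin L → Fin K → Fin n → Fin 2) : ℝ :=
  vnEnt (willieAvg π f) -
    ((M : ℝ) * L * K)⁻¹ * ∑ m, ∑ ℓ, ∑ k, vnEnt (willieWord π (f m ℓ k))

/-! For every state `σ`, Donald's identity `χ = ∑ p(xⁿ) D(ω_{xⁿ}‖σ) - D(ρ̄‖σ)` expresses the Holevo
information through relative entropies. With `σ = ω₀^{⊗n}`, additivity of the relative entropy on
product states makes `D(ω_{xⁿ}‖ω₀^{⊗n})` equal to `D(ω₁‖ω₀)` times the number of non-innocent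
letters of `xⁿ`, whose average is `n μₙ`. Hence `I(xⁿ; Wⁿ) = n μₙ D(ω₁‖ω₀) - D(ρ̄‖ω₀^{⊗n})`. By
covertness and Klein's inequality `0 ≤ D(ρ̄‖ω₀^{⊗n}) ≤ δ`, so this is at least
`n μₙ D(ω₁‖ω₀) - δ`, and `δ ≤ 2δ`. -/

section EntropyIdentities

variable {α τ : Type*} [Fintype α] [DecidableEq α] [Fintype τ]

lemma relEnt_eq_neg_vnEnt_sub (ρ σ : Matrix α α ℂ) :
    relEnt ρ σ = -vnEnt ρ - ((ρ * matLog σ).trace).re := by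
  rw [relEnt, vnEnt, mul_sub, trace_sub, Complex.sub_re, neg_neg]

lemma relEnt_self (ρ : Matrix α α ℂ) : relEnt ρ ρ = 0 := by
  simp [relEnt]

lemma relEnt_zero_left (σ : Matrix α α ℂ) : relEnt 0 σ = 0 := by
  simp [relEnt]

/-- Donald's identity. -/
lemma vnEnt_sum_smul_sub (c : τ → ℝ) (ρ : τ → Matrix α α ℂ) (σ : Matrix α α ℂ) :
    vnEnt (∑ t, (c t : ℂ) • ρ t) - ∑ t, c t * vnEnt (ρ t) =
      ∑ t, c t * relEnt (ρ t) σ - relEnt (∑ t, (c t : ℂ) • ρ t) σ := by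
  have cross_entropy : (((∑ t, (c t : ℂ) • ρ t) * matLog σ).trace).re =
      ∑ t, c t * ((ρ t * matLog σ).trace).re := by
    simp only [Finset.sum_mul, smul_mul_assoc, trace_sum, trace_smul, smul_eq_mul,
      Complex.re_sum, Complex.re_ofReal_mul]
  simp only [relEnt_eq_neg_vnEnt_sub _ σ, cross_entropy, mul_sub, mul_neg,
    Finset.sum_sub_distrib, Finset.sum_neg_distrib]
  ring

end EntropyIdentities

section Eigendecomposition

variable {α : Type*} [Fintype α] [DecidableEq α]

/-- `A = U diag(d) U*` with `U` unitary and `d` real. The eigenvalues may come in any order, so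
that products and tensor products of eigendecompositions are again eigendecompositions. -/
structure IsEigendecomposition (A U : Matrix α α ℂ) (d : α → ℝ) : Prop where
  mem_unitaryGroup : U ∈ unitaryGroup α ℂ
  eq_mul : A = U * diagonal (fun i => (d i : ℂ)) * star U

lemma isEigendecomposition_eigenvalues {A : Matrix α α ℂ} (hA : A.IsHermitian) :
    IsEigendecomposition A hA.eigenvectorUnitary hA.eigenvalues where
  mem_unitaryGroup := hA.eigenvectorUnitary.2
  eq_mul := hA.spectral_theorem.trans (Unitary.conjStarAlgAut_apply _ _)

lemma exists_isEigendecomposition {A : Matrix α α ℂ} (hA : A.IsHermitian) :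
    ∃ U d, IsEigendecomposition A U d :=
  ⟨_, _, isEigendecomposition_eigenvalues hA⟩

lemma exists_isEigendecomposition_nonneg {A : Matrix α α ℂ} (hA : A.PosSemidef) :
    ∃ U d, IsEigendecomposition A U d ∧ 0 ≤ d :=
  ⟨_, _, isEigendecomposition_eigenvalues hA.isHermitian, hA.eigenvalues_nonneg⟩

lemma isEigendecomposition_one {U : Matrix α α ℂ} (hU : U ∈ unitaryGroup α ℂ) :
    IsEigendecomposition 1 U 1 where
  mem_unitaryGroup := hU
  eq_mul := by simp [mem_unitaryGroup_iff.mp hU]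

lemma diagonal_comp_mul_eq_mul_diagonal_comp {R : Type*} [CommRing R] [IsDomain R]
    {p q : α → R} {C : Matrix α α R} (h : diagonal p * C = C * diagonal q) (g : R → R) :
    diagonal (g ∘ p) * C = C * diagonal (g ∘ q) := by
  ext i j
  have hij : p i * C i j = C i j * q j := by
    simpa only [diagonal_mul, mul_diagonal] using congr_fun₂ h i j
  rw [diagonal_mul, mul_diagonal, mul_comm]
  rcases eq_or_ne (C i j) 0 with hC | hC
  · simp [hC]
  · rw [mul_comm] at hij
    simp [mul_left_cancel₀ hC hij]

namespace IsEigendecomposition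

variable {A B U V : Matrix α α ℂ} {d p q : α → ℝ}

lemma mul_star_self (h : IsEigendecomposition A U d) : U * star U = 1 :=
  mem_unitaryGroup_iff.mp h.mem_unitaryGroup

lemma star_mul_self (h : IsEigendecomposition A U d) : star U * U = 1 :=
  mem_unitaryGroup_iff'.mp h.mem_unitaryGroup

lemma mul_eigenvectors (h : IsEigendecomposition A U d) :
    A * U = U * diagonal (fun i => (d i : ℂ)) := by
  conv_lhs => rw [h.eq_mul, mul_assoc, h.star_mul_self, mul_one]

lemma star_mul_eq (h : IsEigendecomposition A U d) :
    star U * A = diagonal (fun i => (d i : ℂ)) * star U := by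
  conv_lhs => rw [h.eq_mul, ← mul_assoc, ← mul_assoc, h.star_mul_self, one_mul]

lemma isHermitian (h : IsEigendecomposition A U d) : A.IsHermitian := by
  have hd : (diagonal (fun i => (d i : ℂ))).IsHermitian := by
    rw [isHermitian_diagonal_iff]
    exact fun i => Complex.conj_ofReal _
  rw [h.eq_mul]
  exact isHermitian_mul_mul_conjTranspose U hd

lemma mul (hA : IsEigendecomposition A U p) (hB : IsEigendecomposition B U q) :
    IsEigendecomposition (A * B) U (p * q) where
  mem_unitaryGroup := hA.mem_unitaryGroup
  eq_mul := by
    conv_lhs => rw [hB.eq_mul, ← mul_assoc, ← mul_assoc, hA.mul_eigenvectors, mul_assoc U,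
      diagonal_mul_diagonal]
    simp

/-- The functional calculus does not depend on the chosen eigendecomposition: the change of basis
between two of them only links equal eigenvalues. -/
lemma matFun (h : IsEigendecomposition A U d) (f : ℝ → ℝ) :
    IsEigendecomposition (matFun f A) U (f ∘ d) := by
  refine ⟨h.mem_unitaryGroup, ?_⟩
  have hE := isEigendecomposition_eigenvalues h.isHermitian
  rw [CovertPaper.matFun, dif_pos h.isHermitian]
  set V := (h.isHermitian.eigenvectorUnitary : Matrix α α ℂ)
  set e := h.isHermitian.eigenvalues
  have intertwine : diagonal (fun i => (e i : ℂ)) * (star V * U) =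
      star V * U * diagonal (fun i => (d i : ℂ)) := by
    rw [← mul_assoc, ← hE.star_mul_eq, mul_assoc, h.mul_eigenvectors, mul_assoc]
  have intertwine_f : diagonal (fun i => (f (e i) : ℂ)) * (star V * U) =
      star V * U * diagonal (fun i => (f (d i) : ℂ)) :=
    diagonal_comp_mul_eq_mul_diagonal_comp intertwine fun z => (f z.re : ℂ)
  calc V * diagonal (fun i => (f (e i) : ℂ)) * star V
      = V * (diagonal (fun i => (f (e i) : ℂ)) * (star V * U)) * star U := by
        simp only [mul_assoc, h.mul_star_self, mul_one]
    _ = V * star V * U * diagonal (fun i => (f (d i) : ℂ)) * star U := by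
        simp only [intertwine_f, mul_assoc]
    _ = U * diagonal (fun i => ((f ∘ d) i : ℂ)) * star U := by
        rw [hE.mul_star_self, one_mul]; rfl

lemma trace_mul_eq_sum (h : IsEigendecomposition A U d) (B : Matrix α α ℂ) :
    (B * A).trace = ∑ j, (star U * B * U) j j * d j := by
  rw [h.eq_mul, ← mul_assoc, ← mul_assoc, trace_mul_comm, ← mul_assoc, ← mul_assoc]
  simp [trace, mul_diagonal]

lemma trace_mul_eq_sum_overlap (hA : IsEigendecomposition A V p) (hB : IsEigendecomposition B U q) :
    (A * B).trace = ((∑ j, ∑ i, Complex.normSq ((star V * U) i j) * (p i * q j) : ℝ) : ℂ) := by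
  have diag_entry (j : α) : (star U * A * U) j j =
      ∑ i, (Complex.normSq ((star V * U) i j) : ℂ) * p i := by
    have : star U * A * U =
        star (star V * U) * (diagonal (fun i => (p i : ℂ)) * (star V * U)) := by
      rw [star_mul, star_star, hA.eq_mul]
      simp only [mul_assoc]
    rw [this, mul_apply]
    refine Finset.sum_congr rfl fun i _ => ?_
    rw [diagonal_mul, star_apply, Complex.normSq_eq_conj_mul_self, RCLike.star_def]
    ring
  rw [hB.trace_mul_eq_sum]
  push_cast
  simp only [diag_entry, Finset.sum_mul, mul_assoc]

lemma suppLE_iff (h : IsEigendecomposition B U q) :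
    SuppLE A B ↔ ∀ j, q j = 0 → ∀ i, (A * U) i j = 0 := by
  constructor
  · intro hs j hj i
    have hker : B *ᵥ U.col j = 0 := by
      ext k
      have := congr_fun₂ h.mul_eigenvectors k j
      rw [mul_diagonal, hj, Complex.ofReal_zero, mul_zero] at this
      exact this
    exact congr_fun (hs _ hker) i
  · intro hcol v hv
    have hcoord (j : α) : (q j : ℂ) * (star U *ᵥ v) j = 0 := by
      have : diagonal (fun i => (q i : ℂ)) *ᵥ (star U *ᵥ v) = 0 := by
        rw [mulVec_mulVec, ← h.star_mul_eq, ← mulVec_mulVec, hv, mulVec_zero]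
      simpa only [mulVec_diagonal, Pi.zero_apply] using congr_fun this j
    have hA : A *ᵥ v = (A * U) *ᵥ (star U *ᵥ v) := by
      rw [mulVec_mulVec, mul_assoc, h.mul_star_self, mul_one]
    rw [hA]
    ext i
    rw [mulVec, dotProduct]
    refine Finset.sum_eq_zero fun j _ => ?_
    rcases mul_eq_zero.mp (hcoord j) with hj | hj
    · rw [hcol j (by exact_mod_cast hj), zero_mul]
    · rw [hj, mul_zero]

lemma eigenvalue_eq_zero_or_overlap_eq_zero (hA : IsEigendecomposition A V p)
    (hB : IsEigendecomposition B U q) (hs : SuppLE A B) {j : α} (hj : q j = 0) (i : α) :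
    p i = 0 ∨ (star V * U) i j = 0 := by
  have hij : (star V * (A * U)) i j = 0 := by
    rw [mul_apply]
    exact Finset.sum_eq_zero fun k _ => by rw [hB.suppLE_iff.mp hs j hj, mul_zero]
  rw [← mul_assoc, hA.star_mul_eq, mul_assoc, diagonal_mul] at hij
  exact_mod_cast mul_eq_zero.mp hij

end IsEigendecomposition

end Eigendecomposition

section Klein

variable {α : Type*} [Fintype α] [DecidableEq α]

open InformationTheory in
lemma sub_le_mul_log_sub_log {p q : ℝ} (hp : 0 ≤ p) (hq : 0 < q) :
    p - q ≤ p * (Real.log p - Real.log q) := by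
  rcases hp.eq_or_lt with rfl | hp
  · simpa using hq.le
  · have hkl : q * klFun (p / q) = p * (Real.log p - Real.log q) - (p - q) := by
      rw [klFun_apply, Real.log_div hp.ne' hq.ne']
      field_simp
      ring
    linarith [mul_nonneg hq.le (klFun_nonneg (div_nonneg hp.le hq.le))]

/-- Klein's inequality. In eigenbases of `ρ` and `σ`, each of the four traces is a sum over pairs
of eigenvalues `(p i, q j)` weighted by the squared overlap of their eigenvectors, which reduces
the claim to the scalar inequality. -/
lemma trace_sub_trace_le_relEnt {ρ σ : Matrix α α ℂ} (hρ : ρ.PosSemidef) (hσ : σ.PosSemidef)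
    (hs : SuppLE ρ σ) : ρ.trace.re - σ.trace.re ≤ relEnt ρ σ := by
  obtain ⟨V, p, hP, hp⟩ := exists_isEigendecomposition_nonneg hρ
  obtain ⟨U, q, hQ, hq⟩ := exists_isEigendecomposition_nonneg hσ
  let w : α → α → ℝ := fun j i => Complex.normSq ((star V * U) i j)
  have hI := isEigendecomposition_one hP.mem_unitaryGroup
  have hJ := isEigendecomposition_one hQ.mem_unitaryGroup
  have trace_ρ : ρ.trace.re = ∑ j, ∑ i, w j i * p i := by
    simpa [w] using congr_arg Complex.re (hP.trace_mul_eq_sum_overlap hJ)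
  have trace_σ : σ.trace.re = ∑ j, ∑ i, w j i * q j := by
    simpa [w] using congr_arg Complex.re (hI.trace_mul_eq_sum_overlap hQ)
  have trace_ρ_log_ρ : (ρ * matLog ρ).trace.re =
      ∑ j, ∑ i, w j i * (p i * Real.log (p i)) := by
    simpa [w, matLog] using
      congr_arg Complex.re ((hP.mul (hP.matFun Real.log)).trace_mul_eq_sum_overlap hJ)
  have trace_ρ_log_σ : (ρ * matLog σ).trace.re =
      ∑ j, ∑ i, w j i * (p i * Real.log (q j)) := by
    simpa [w, matLog] using congr_arg Complex.re (hP.trace_mul_eq_sum_overlap (hQ.matFun Real.log))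
  rw [relEnt, mul_sub, trace_sub, Complex.sub_re, trace_ρ, trace_σ, trace_ρ_log_ρ, trace_ρ_log_σ]
  simp only [← Finset.sum_sub_distrib, ← mul_sub]
  refine Finset.sum_le_sum fun j _ => Finset.sum_le_sum fun i _ => ?_
  rcases (hq j).eq_or_lt' with hj | hj
  · rcases hP.eigenvalue_eq_zero_or_overlap_eq_zero hQ hs hj i with hi | hi
    · simp [hi, hj]
    · simp [w, hi]
  · exact mul_le_mul_of_nonneg_left (sub_le_mul_log_sub_log (hp i) hj)
      (Complex.normSq_nonneg _)

lemma relEnt_nonneg {ρ σ : Matrix α α ℂ} (hρ : IsDensity ρ) (hσ : IsDensity σ)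
    (hs : SuppLE ρ σ) : 0 ≤ relEnt ρ σ := by
  simpa [hρ.2, hσ.2] using trace_sub_trace_le_relEnt hρ.1 hσ.1 hs

end Klein

section SuppLE

variable {α τ : Type*} [Fintype α] [Fintype τ]

lemma suppLE_refl (ρ : Matrix α α ℂ) : SuppLE ρ ρ := fun _ h => h

lemma suppLE_sum_smul (c : τ → ℂ) {ρ : τ → Matrix α α ℂ} {σ : Matrix α α ℂ}
    (h : ∀ t, SuppLE (ρ t) σ) : SuppLE (∑ t, c t • ρ t) σ := fun v hv => by
  simp only [sum_mulVec, smul_mulVec, h _ v hv, smul_zero, Finset.sum_const_zero]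

end SuppLE

section PiKronecker

variable {κ : Type*} [Fintype κ] {α : κ → Type*}

/-- The tensor product `⨂ₖ A k` of a finite family of square matrices; `stringState` and `tpow`
are special cases. -/
def piKronecker {R : Type*} [CommSemiring R] (A : ∀ k, Matrix (α k) (α k) R) :
    Matrix (∀ k, α k) (∀ k, α k) R :=
  of fun a b => ∏ k, A k (a k) (b k)

section Algebra

variable {R : Type*} [CommSemiring R]

lemma piKronecker_apply (A : ∀ k, Matrix (α k) (α k) R) (a b : ∀ k, α k) :
    piKronecker A a b = ∏ k, A k (a k) (b k) := rfl

lemma star_piKronecker [StarRing R] (A : ∀ k, Matrix (α k) (α k) R) :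
    star (piKronecker A) = piKronecker fun k => star (A k) := by
  ext a b
  simp [piKronecker_apply, star_apply]

lemma piKronecker_diagonal [∀ k, DecidableEq (α k)] (d : ∀ k, α k → R) :
    piKronecker (fun k => diagonal (d k)) = diagonal fun a => ∏ k, d k (a k) := by
  ext a b
  rcases eq_or_ne a b with rfl | hab
  · simp [piKronecker_apply]
  · obtain ⟨k, hk⟩ := Function.ne_iff.mp hab
    rw [diagonal_apply_ne _ hab]
    exact Finset.prod_eq_zero (Finset.mem_univ k) (diagonal_apply_ne _ hk)

lemma piKronecker_one [∀ k, DecidableEq (α k)] :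
    piKronecker (fun k => (1 : Matrix (α k) (α k) R)) = 1 := by
  simpa using piKronecker_diagonal fun k (_ : α k) => (1 : R)

variable [DecidableEq κ] [∀ k, Fintype (α k)]

lemma piKronecker_mul (A B : ∀ k, Matrix (α k) (α k) R) :
    piKronecker A * piKronecker B = piKronecker fun k => A k * B k := by
  ext a b
  simp only [piKronecker_apply, mul_apply, Finset.prod_univ_sum, Fintype.piFinset_univ,
    Finset.prod_mul_distrib]

lemma trace_piKronecker (A : ∀ k, Matrix (α k) (α k) R) :
    (piKronecker A).trace = ∏ k, (A k).trace := by
  simp only [trace, diag_apply, piKronecker_apply, Finset.prod_univ_sum, Fintype.piFinset_univ]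

/-- Linearity of expectation under a product distribution. -/
lemma sum_prod_mul_sum_eq_sum_sum_mul {w : ∀ k, α k → R} (hw : ∀ k, ∑ j, w k j = 1)
    (g : ∀ k, α k → R) :
    ∑ a : ∀ k, α k, (∏ k, w k (a k)) * ∑ k, g k (a k) = ∑ k, ∑ j, w k j * g k j := by
  simp only [Finset.mul_sum]
  rw [Finset.sum_comm]
  refine Finset.sum_congr rfl fun k _ => ?_
  calc ∑ a : ∀ l, α l, (∏ l, w l (a l)) * g k (a k)
      = ∑ a : ∀ l, α l, ∏ l, w l (a l) * (if l = k then g l (a l) else 1) := by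
        simp only [Finset.prod_mul_distrib, Fintype.prod_ite_eq']
    _ = ∏ l, ∑ j, w l j * (if l = k then g l j else 1) := by
        rw [Finset.prod_univ_sum, Fintype.piFinset_univ]
    _ = ∑ j, w k j * g k j := by
        rw [Fintype.prod_eq_single k fun l hl => by simp [hl, hw]]
        simp

end Algebra

open scoped MatrixOrder in
lemma posSemidef_piKronecker [∀ k, Finite (α k)] {A : ∀ k, Matrix (α k) (α k) ℂ}
    (hA : ∀ k, (A k).PosSemidef) : (piKronecker A).PosSemidef := by
  classical
  have := fun k => Fintype.ofFinite (α k)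
  choose S hS using fun k => CStarAlgebra.nonneg_iff_eq_star_mul_self.mp (hA k).nonneg
  have : piKronecker A = (piKronecker S)ᴴ * piKronecker S := by
    rw [← star_eq_conjTranspose, star_piKronecker, piKronecker_mul]
    exact congr_arg piKronecker (funext hS)
  exact this ▸ posSemidef_conjTranspose_mul_self _

variable [DecidableEq κ] [∀ k, Fintype (α k)]

lemma isDensity_piKronecker {A : ∀ k, Matrix (α k) (α k) ℂ} (hA : ∀ k, IsDensity (A k)) :
    IsDensity (piKronecker A) :=
  ⟨posSemidef_piKronecker fun k => (hA k).1, by simp [trace_piKronecker, (hA _).2]⟩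

lemma isEigendecomposition_piKronecker [∀ k, DecidableEq (α k)]
    {A U : ∀ k, Matrix (α k) (α k) ℂ} {d : ∀ k, α k → ℝ}
    (h : ∀ k, IsEigendecomposition (A k) (U k) (d k)) :
    IsEigendecomposition (piKronecker A) (piKronecker U) fun a => ∏ k, d k (a k) where
  mem_unitaryGroup := by
    simp only [mem_unitaryGroup_iff, star_piKronecker, piKronecker_mul, (h _).mul_star_self,
      piKronecker_one]
  eq_mul := by
    push_cast
    rw [← piKronecker_diagonal fun k j => (d k j : ℂ), star_piKronecker, piKronecker_mul,
      piKronecker_mul]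
    exact congr_arg piKronecker (funext fun k => (h k).eq_mul)

lemma suppLE_piKronecker {A σ : ∀ k, Matrix (α k) (α k) ℂ} (hσ : ∀ k, (σ k).IsHermitian)
    (hs : ∀ k, SuppLE (A k) (σ k)) : SuppLE (piKronecker A) (piKronecker σ) := by
  classical
  choose U d hE using fun k => exists_isEigendecomposition (hσ k)
  rw [(isEigendecomposition_piKronecker hE).suppLE_iff]
  intro b hb a
  obtain ⟨k, -, hk⟩ := Finset.prod_eq_zero_iff.mp hb
  rw [piKronecker_mul, piKronecker_apply]
  exact Finset.prod_eq_zero (Finset.mem_univ k) ((hE k).suppLE_iff.mp (hs k) _ hk _)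

variable [∀ k, DecidableEq (α k)]

/-- `log ∏ = ∑ log` fails only at a zero eigenvalue of some `σ k`, and there `⨂ₖ A k` has no
weight because of the support condition. -/
lemma trace_piKronecker_mul_matLog {A σ : ∀ k, Matrix (α k) (α k) ℂ}
    (htr : ∀ k, (A k).trace = 1) (hσ : ∀ k, (σ k).IsHermitian)
    (hs : ∀ k, SuppLE (A k) (σ k)) :
    (piKronecker A * matLog (piKronecker σ)).trace = ∑ k, (A k * matLog (σ k)).trace := by
  choose U d hE using fun k => exists_isEigendecomposition (hσ k)
  let w : ∀ k, α k → ℂ := fun k j => (star (U k) * A k * U k) j j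
  have sum_w (k : κ) : ∑ j, w k j = 1 := by
    change (star (U k) * A k * U k).trace = 1
    rw [trace_mul_comm, ← mul_assoc, (hE k).mul_star_self, one_mul, htr]
  have w_eq_zero (k : κ) (j : α k) (hj : d k j = 0) : w k j = 0 := by
    simp only [w, mul_assoc]
    rw [mul_apply]
    exact Finset.sum_eq_zero fun i _ => by rw [(hE k).suppLE_iff.mp (hs k) j hj, mul_zero]
  have log_term (a : ∀ k, α k) : (∏ k, w k (a k)) * (Real.log (∏ k, d k (a k)) : ℂ) =
      (∏ k, w k (a k)) * ∑ k, (Real.log (d k (a k)) : ℂ) := by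
    by_cases ha : ∃ k, d k (a k) = 0
    · obtain ⟨k, hk⟩ := ha
      rw [Finset.prod_eq_zero (Finset.mem_univ k) (w_eq_zero k _ hk), zero_mul, zero_mul]
    · rw [Real.log_prod fun k _ => not_exists.mp ha k, Complex.ofReal_sum]
  calc (piKronecker A * matLog (piKronecker σ)).trace
      = ∑ a : ∀ k, α k, (∏ k, w k (a k)) * (Real.log (∏ k, d k (a k)) : ℂ) := by
        rw [matLog, ((isEigendecomposition_piKronecker hE).matFun Real.log).trace_mul_eq_sum,
          star_piKronecker, piKronecker_mul, piKronecker_mul]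
        simp only [piKronecker_apply, Function.comp_apply, w]
    _ = ∑ k, ∑ j, w k j * (Real.log (d k j) : ℂ) := by
        simp only [log_term]
        exact sum_prod_mul_sum_eq_sum_sum_mul sum_w fun k j => (Real.log (d k j) : ℂ)
    _ = ∑ k, (A k * matLog (σ k)).trace := by
        simp only [matLog, ((hE _).matFun Real.log).trace_mul_eq_sum, Function.comp_apply, w]

lemma relEnt_piKronecker {A σ : ∀ k, Matrix (α k) (α k) ℂ} (htr : ∀ k, (A k).trace = 1)
    (hA : ∀ k, (A k).IsHermitian) (hσ : ∀ k, (σ k).IsHermitian)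
    (hs : ∀ k, SuppLE (A k) (σ k)) :
    relEnt (piKronecker A) (piKronecker σ) = ∑ k, relEnt (A k) (σ k) := by
  simp only [relEnt, mul_sub, trace_sub, Complex.sub_re, Finset.sum_sub_distrib]
  rw [trace_piKronecker_mul_matLog htr hA fun k => suppLE_refl (A k),
    trace_piKronecker_mul_matLog htr hσ hs, Complex.re_sum, Complex.re_sum]

end PiKronecker

section PartialTrace

variable {α β : Type*} [Fintype α] [Fintype β]

lemma isDensity_ptraceLeft {ρ : Matrix (α × β) (α × β) ℂ} (hρ : IsDensity ρ) :
    IsDensity (ptraceLeft ρ) := by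
  constructor
  · have : ptraceLeft ρ = ∑ a, ρ.submatrix (Prod.mk a) (Prod.mk a) := by
      ext b b'
      simp [ptraceLeft, Matrix.sum_apply]
    exact this ▸ posSemidef_sum _ fun a _ => hρ.1.submatrix _
  · rw [← hρ.2]
    simp only [ptraceLeft, trace, diag_apply, of_apply]
    rw [Fintype.sum_prod_type, Finset.sum_comm]

end PartialTrace

section Code

variable {n M L K : ℕ}

lemma nat_mul_sparsity (f : Fin M → Fin L → Fin K → Fin n → Fin 2) :
    n * sparsity f = ∑ t : Fin M × Fin L × Fin K,
      ((M : ℝ) * L * K)⁻¹ * hammingNorm (f t.1 t.2.1 t.2.2) := by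
  have weight (x : Fin n → Fin 2) :
      ∑ i, (if x i = 0 then (0 : ℝ) else 1) = hammingNorm x := by
    simp [hammingNorm, Finset.sum_ite]
  rcases eq_or_ne (n : ℝ) 0 with hn | hn
  · obtain rfl : n = 0 := by exact_mod_cast hn
    simp [hammingNorm]
  · simp only [sparsity, weight, Fintype.sum_prod_type, ← Finset.mul_sum]
    field_simp

lemma willieAvg_eq_sum {B W : Type*} [Fintype B] (π : Fin 2 → Matrix (B × W) (B × W) ℂ)
    (f : Fin M → Fin L → Fin K → Fin n → Fin 2) :
    willieAvg π f = ∑ t : Fin M × Fin L × Fin K,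
      ((((M : ℝ) * L * K)⁻¹ : ℝ) : ℂ) • willieWord π (f t.1 t.2.1 t.2.2) := by
  simp only [willieAvg, ← Finset.smul_sum, Fintype.sum_prod_type]

variable {B W : Type*} [Fintype B] [Fintype W] {π : Fin 2 → Matrix (B × W) (B × W) ℂ}

lemma isDensity_willieOut (hπ : ∀ x, IsDensity (π x)) (x : Fin 2) : IsDensity (willieOut π x) :=
  isDensity_ptraceLeft (hπ x)

lemma isDensity_willieWord (hπ : ∀ x, IsDensity (π x)) (x : Fin n → Fin 2) :
    IsDensity (willieWord π x) :=
  isDensity_piKronecker fun i => isDensity_willieOut hπ (x i)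

lemma isDensity_tpow_willieOut (hπ : ∀ x, IsDensity (π x)) (x : Fin 2) :
    IsDensity (tpow (willieOut π x) n) :=
  isDensity_piKronecker fun _ => isDensity_willieOut hπ x

lemma isDensity_willieAvg (hπ : ∀ x, IsDensity (π x)) (hcard : (M : ℝ) * L * K ≠ 0)
    (f : Fin M → Fin L → Fin K → Fin n → Fin 2) : IsDensity (willieAvg π f) := by
  have hweight : (0 : ℂ) ≤ ((((M : ℝ) * L * K)⁻¹ : ℝ) : ℂ) := by
    exact_mod_cast (by positivity : (0 : ℝ) ≤ ((M : ℝ) * L * K)⁻¹)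
  have hcard' : (M : ℂ) * L * K ≠ 0 := by exact_mod_cast hcard
  rw [willieAvg_eq_sum]
  constructor
  · exact posSemidef_sum _ fun t _ => (isDensity_willieWord hπ _).1.smul hweight
  · simp only [trace_sum, trace_smul, (isDensity_willieWord hπ _).2]
    push_cast [Finset.sum_const, Finset.card_univ, Fintype.card_prod, Fintype.card_fin]
    simp only [nsmul_eq_mul, smul_eq_mul, mul_one, ← mul_assoc, Nat.cast_mul]
    exact mul_inv_cancel₀ hcard'

lemma suppLE_willieOut_zero (hω : SuppLE (willieOut π 1) (willieOut π 0)) (x : Fin 2) :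
    SuppLE (willieOut π x) (willieOut π 0) := by
  fin_cases x
  exacts [suppLE_refl _, hω]

variable [DecidableEq W]

lemma relEnt_willieAvg_nonneg (hπ : ∀ x, IsDensity (π x))
    (hω : SuppLE (willieOut π 1) (willieOut π 0)) (f : Fin M → Fin L → Fin K → Fin n → Fin 2) :
    0 ≤ relEnt (willieAvg π f) (tpow (willieOut π 0) n) := by
  by_cases hcard : (M : ℝ) * L * K = 0
  · have : willieAvg π f = 0 := by simp [willieAvg, hcard]
    rw [this, relEnt_zero_left]
  · refine relEnt_nonneg (isDensity_willieAvg hπ hcard f) (isDensity_tpow_willieOut hπ 0) ?_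
    rw [willieAvg_eq_sum]
    exact suppLE_sum_smul _ fun t => suppLE_piKronecker
      (fun _ => (isDensity_willieOut hπ 0).1.isHermitian) fun _ => suppLE_willieOut_zero hω _

lemma relEnt_willieWord (hπ : ∀ x, IsDensity (π x))
    (hω : SuppLE (willieOut π 1) (willieOut π 0)) (x : Fin n → Fin 2) :
    relEnt (willieWord π x) (tpow (willieOut π 0) n) =
      hammingNorm x * relEnt (willieOut π 1) (willieOut π 0) := by
  have hd := isDensity_willieOut hπ
  have letter (y : Fin 2) : relEnt (willieOut π y) (willieOut π 0) =
      if y ≠ 0 then relEnt (willieOut π 1) (willieOut π 0) else 0 := by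
    fin_cases y <;> simp [relEnt_self]
  calc relEnt (willieWord π x) (tpow (willieOut π 0) n)
      = ∑ i, relEnt (willieOut π (x i)) (willieOut π 0) :=
        relEnt_piKronecker (fun _ => (hd _).2) (fun _ => (hd _).1.isHermitian)
          (fun _ => (hd 0).1.isHermitian) fun _ => suppLE_willieOut_zero hω _
    _ = ∑ i, if x i ≠ 0 then relEnt (willieOut π 1) (willieOut π 0) else 0 :=
        Finset.sum_congr rfl fun i _ => letter (x i)
    _ = hammingNorm x * relEnt (willieOut π 1) (willieOut π 0) := by
        rw [← Finset.sum_filter, Finset.sum_const, nsmul_eq_mul, hammingNorm]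

variable [DecidableEq B]

lemma holevoW_eq_sum_relEnt_sub_relEnt (π : Fin 2 → Matrix (B × W) (B × W) ℂ)
    (f : Fin M → Fin L → Fin K → Fin n → Fin 2) (σ : Matrix (Fin n → W) (Fin n → W) ℂ) :
    holevoW π f = ∑ t : Fin M × Fin L × Fin K,
      ((M : ℝ) * L * K)⁻¹ * relEnt (willieWord π (f t.1 t.2.1 t.2.2)) σ -
        relEnt (willieAvg π f) σ := by
  have average_entropy : ((M : ℝ) * L * K)⁻¹ * ∑ m, ∑ ℓ, ∑ k, vnEnt (willieWord π (f m ℓ k)) =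
      ∑ t : Fin M × Fin L × Fin K,
        ((M : ℝ) * L * K)⁻¹ * vnEnt (willieWord π (f t.1 t.2.1 t.2.2)) := by
    simp only [← Finset.mul_sum, Fintype.sum_prod_type]
  rw [holevoW, average_entropy, willieAvg_eq_sum, vnEnt_sum_smul_sub]

lemma holevoW_eq (hπ : ∀ x, IsDensity (π x))
    (hω : SuppLE (willieOut π 1) (willieOut π 0)) (f : Fin M → Fin L → Fin K → Fin n → Fin 2) :
    holevoW π f = n * sparsity f * relEnt (willieOut π 1) (willieOut π 0) -
      relEnt (willieAvg π f) (tpow (willieOut π 0) n) := by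
  rw [holevoW_eq_sum_relEnt_sub_relEnt π f (tpow (willieOut π 0) n), nat_mul_sparsity]
  simp only [relEnt_willieWord hπ hω, Finset.sum_mul, mul_assoc]

theorem holevo_information_lower_bound_general (hπ : ∀ x, IsDensity (π x))
    (hω : SuppLE (willieOut π 1) (willieOut π 0)) (f : Fin M → Fin L → Fin K → Fin n → Fin 2)
    {δcov : ℝ} (hcov : relEnt (willieAvg π f) (tpow (willieOut π 0) n) ≤ δcov) :
    n * sparsity f * relEnt (willieOut π 1) (willieOut π 0) - δcov ≤ holevoW π f := by
  linarith [holevoW_eq hπ hω f]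

end Code

/-- **Lemma** (lower bound on Willie's Holevo information): under the covertness constraint
`D(ρ̄_{W^n}‖ω₀^{⊗n}) ≤ δ_n^{cov}` and `√n μ_n → 0`, one has
`I(x^n;W^n) ≥ n μ_n D(ω₁‖ω₀) − 2δ_n^{cov}`. -/
theorem holevo_information_lower_bound
    (π : Fin 2 → Matrix (B × W) (B × W) ℂ)
    (hπ : ∀ x, IsDensity (π x))
    (hω : SuppLE (willieOut π 1) (willieOut π 0))
    (M L K : ℕ → ℕ)
    (f : ∀ n : ℕ, Fin (M n) → Fin (L n) → Fin (K n) → Fin n → Fin 2)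
    (δcov : ℕ → ℝ)
    (hcov : ∀ n, relEnt (willieAvg π (f n)) (tpow (willieOut π 0) n) ≤ δcov n)
    (hμ : Tendsto (fun n : ℕ => Real.sqrt n * sparsity (f n)) atTop (nhds 0)) :
    ∀ n : ℕ,
      (n : ℝ) * sparsity (f n) * relEnt (willieOut π 1) (willieOut π 0) - 2 * δcov n ≤
        holevoW π (f n) := by
  intro n
  linarith [holevo_information_lower_bound_general hπ hω (f n) (hcov n),
    relEnt_willieAvg_nonneg hπ hω (f n), hcov n]

end Statement8

end CovertPaper
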